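/- Let p_1 < p_2 < ... denote the sequence of all primes, let r ≥ 1 be an integer, and for n ≥ 1 let J_r(n) = ∑_{d | n} μ(n/d)·d^r be the Jordan totient of order r. Then the limit as N → ∞ of (1/N) · ∑_{i=1}^N J_r(p_i − 1)/(p_i − 1)^r exists and equals the rank-r Artin constant A_r = ∏_p (1 − 1/(p^r (p − 1))). -/

import Mathlib

open Filter

/-- The Jordan totient `J_r(n) = ∑_{d | n} μ(n/d) d^r`. -/
def jordanTotient (r n : ℕ) : ℤ :=
  ∑ d ∈ n.divisors, ArithmeticFunction.moebius (n / d) * (d : ℤ) ^ r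

/-- The rank-`r` Artin constant `A_r = ∏_p (1 - 1/(p^r (p - 1)))`, product over all primes. -/
noncomputable def artinConstantRank (r : ℕ) : ℝ :=
  ∏' p : Nat.Primes, (1 - 1 / (((p : ℕ) : ℝ) ^ r * (((p : ℕ) : ℝ) - 1)))


section TauberianKernel
open MeasureTheory Set Complex Topology

/-- The Fejér kernel. -/
noncomputable def fejK (w : ℝ) : ℝ := if w = 0 then 1 else 2 * (1 - Real.cos w) / w ^ 2

lemma fejK_nonneg (w : ℝ) : 0 ≤ fejK w := by
  unfold fejK
  split_ifs
  · norm_num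
  · have := Real.cos_le_one w
    apply div_nonneg <;> nlinarith [sq_nonneg w]

lemma fejK_measurable : Measurable fejK := by
  unfold fejK
  refine Measurable.ite (measurableSet_singleton 0) measurable_const ?_
  fun_prop

lemma fejK_le (w : ℝ) : fejK w ≤ 5 * (1 + w ^ 2)⁻¹ := by
  rw [← div_eq_mul_inv, le_div_iff₀ (by positivity)]
  unfold fejK
  split_ifs with h
  · subst h; norm_num
  · have h1 := Real.neg_one_le_cos w
    have h2 := Real.one_sub_sq_div_two_le_cos (x := w)
    have h3 : 0 < w ^ 2 := by positivity
    rw [div_mul_eq_mul_div, div_le_iff₀ h3]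
    nlinarith

lemma fejK_integrable : Integrable fejK := by
  refine (integrable_inv_one_add_sq.const_mul 5).mono' fejK_measurable.aestronglyMeasurable ?_
  filter_upwards with w
  rw [Real.norm_of_nonneg (fejK_nonneg w)]
  exact fejK_le w

lemma fejK_integral_pos : 0 < ∫ w, fejK w := by
  rw [integral_pos_iff_support_of_nonneg fejK_nonneg fejK_integrable]
  have : Ioo (0:ℝ) 1 ⊆ Function.support fejK := by
    intro w hw
    have hw0 : w ≠ 0 := hw.1.ne'
    simp only [Function.mem_support, fejK, hw0, if_false]
    have : Real.cos w < 1 := by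
      have := Real.cos_lt_cos_of_nonneg_of_le_pi_div_two (le_refl 0) (by linarith [Real.pi_gt_three, hw.2]) hw.1
      simpa using this
    have h3 : 0 < w ^ 2 := by positivity
    apply ne_of_gt
    apply div_pos <;> linarith
  exact lt_of_lt_of_le (by simp) (measure_mono this)

lemma fej_cos (w : ℝ) (hw : w ≠ 0) :
    ∫ t in (0:ℝ)..1, (1 - t) * Real.cos (t * w) = (1 - Real.cos w) / w ^ 2 := by
  have h : ∀ t ∈ uIcc (0:ℝ) 1, HasDerivAt
      (fun t => (1 - t) * (Real.sin (t * w) / w) - Real.cos (t * w) / w ^ 2)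
      ((1 - t) * Real.cos (t * w)) t := by
    intro t _
    have h1 : HasDerivAt (fun t : ℝ => t * w) w t := by simpa using (hasDerivAt_id t).mul_const w
    have h2 := ((hasDerivAt_id t).const_sub 1).mul (h1.sin.div_const w)
    have h3 := h2.sub (h1.cos.div_const (w ^ 2))
    convert! h3 using 1
    simp only [id]
    field_simp
    ring
  rw [intervalIntegral.integral_eq_sub_of_hasDerivAt h]
  · simp
    field_simp
    ring
  · apply Continuous.intervalIntegrable; fun_prop

lemma fej_fourier (w : ℝ) :
    ∫ t in (-1:ℝ)..1, ((1 - |t| : ℝ) : ℂ) * cexp (I * (t * w : ℝ)) = (fejK w : ℂ) := by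
  have hLap : ∀ a b : ℝ, IntervalIntegrable
      (fun t : ℝ => ((1 - |t| : ℝ) : ℂ) * cexp (I * (t * w : ℝ))) volume a b := by
    intro a b; apply Continuous.intervalIntegrable; fun_prop
  rw [← intervalIntegral.integral_add_adjacent_intervals (hLap (-1) 0) (hLap 0 1)]
  have e : ∫ t in (-1:ℝ)..0, ((1 - |t| : ℝ) : ℂ) * cexp (I * (t * w : ℝ)) =
      ∫ t in (0:ℝ)..1, ((1 - |t| : ℝ) : ℂ) * cexp (I * (-t * w : ℝ)) := by
    have := intervalIntegral.integral_comp_neg (a := 0) (b := 1)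
      (fun t : ℝ => ((1 - |t| : ℝ) : ℂ) * cexp (I * (t * w : ℝ)))
    simp only [neg_zero, abs_neg] at this
    exact this.symm
  rw [e, ← intervalIntegral.integral_add]
  · have : ∫ t in (0:ℝ)..1, (((1 - |t| : ℝ) : ℂ) * cexp (I * (-t * w : ℝ)) +
        ((1 - |t| : ℝ) : ℂ) * cexp (I * (t * w : ℝ))) =
        ∫ t in (0:ℝ)..1, ((2 * ((1 - t) * Real.cos (t * w)) : ℝ) : ℂ) := by
      apply intervalIntegral.integral_congr
      intro t ht
      rw [uIcc_of_le zero_le_one] at ht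
      simp only [abs_of_nonneg ht.1]
      push_cast
      rw [Complex.cos]
      have : I * (-(t:ℂ) * w) = -(t * w) * I := by ring
      rw [this, mul_comm I]
      ring
    rw [this, intervalIntegral.integral_ofReal, intervalIntegral.integral_const_mul]
    congr 1
    unfold fejK
    split_ifs with h
    · subst h
      simp only [mul_zero, Real.cos_zero, mul_one]
      rw [intervalIntegral.integral_sub (by simp) (by simp)]
      simp
      norm_num
    · rw [fej_cos w h]; ring
  · apply Continuous.intervalIntegrable; fun_prop
  · exact hLap 0 1

lemma fej_fourier_scaled (L : ℝ) (hL : 0 < L) (w : ℝ) :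
    ∫ t in Ioc (-L) L, ((1 - |t| / L : ℝ) : ℂ) * cexp (I * (t * w : ℝ)) =
      ((L * fejK (L * w) : ℝ) : ℂ) := by
  rw [← intervalIntegral.integral_of_le (by linarith)]
  have h := intervalIntegral.integral_comp_mul_left (a := -1) (b := 1)
    (fun t : ℝ => ((1 - |t| / L : ℝ) : ℂ) * cexp (I * (t * w : ℝ))) hL.ne'
  simp only [mul_neg, mul_one] at h
  have h2 := fej_fourier (L * w)
  rw [ofReal_mul, ← h2]
  have h3 : ∫ t in (-1:ℝ)..1, ((1 - |L * t| / L : ℝ) : ℂ) * cexp (I * (L * t * w : ℝ)) =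
      ∫ t in (-1:ℝ)..1, ((1 - |t| : ℝ) : ℂ) * cexp (I * (t * (L * w) : ℝ)) := by
    congr 1
    ext t
    rw [abs_mul, abs_of_pos hL, mul_div_cancel_left₀ _ hL.ne', ← mul_assoc, mul_comm L t]
  rw [← h3, h]
  rw [real_smul, ← mul_assoc, ← ofReal_mul, mul_inv_cancel₀ hL.ne']
  simp

/-- Analytic part of the Tauberian theorem. -/
lemma tauberian_analytic (β : ℝ → ℝ) (hβ : Measurable β) (M : ℝ) (hM : ∀ u, |β u| ≤ M)
    (H : ℂ → ℂ) (hH : ContinuousOn H {s | 0 ≤ s.re})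
    (hLap : ∀ s : ℂ, 0 < s.re → ∫ u in Ioi (0:ℝ), (β u : ℂ) * cexp (-(s * u)) = H s)
    (L : ℝ) (hL : 0 < L) :
    Tendsto (fun v => ∫ u in Ioi (0:ℝ), β u * (L * fejK (L * (v - u)))) atTop (𝓝 0) := by
  have hM0 : 0 ≤ M := (abs_nonneg _).trans (hM 0)
  have hkint : ∀ v, Integrable (fun u => L * fejK (L * (v - u))) := fun v =>
    ((fejK_integrable.comp_mul_left' hL.ne').comp_sub_left v).const_mul L
  -- the Fubini step
  have fub : ∀ ε : ℝ, 0 < ε → ∀ v : ℝ,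
      ∫ u in Ioi (0:ℝ), ((β u * Real.exp (-(ε * u)) * (L * fejK (L * (v - u))) : ℝ) : ℂ) =
      ∫ t in Ioc (-L) L, ((1 - |t| / L : ℝ) : ℂ) * cexp (I * (t * v : ℝ)) * H (ε + I * t) := by
    intro ε hε v
    have i1 : Integrable (fun u => ((β u * Real.exp (-(ε * u)) : ℝ) : ℂ)) (volume.restrict (Ioi 0)) := by
      apply Integrable.ofReal
      refine Integrable.bdd_mul (c := M) ?_ hβ.aestronglyMeasurable
        (Eventually.of_forall fun u => by simpa using hM u)
      have := exp_neg_integrableOn_Ioi 0 hε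
      simpa [neg_mul, IntegrableOn] using this
    have i2 : Integrable (fun t : ℝ => ((1 - |t| / L : ℝ) : ℂ)) (volume.restrict (Ioc (-L) L)) := by
      have : Continuous (fun t : ℝ => ((1 - |t| / L : ℝ) : ℂ)) := by fun_prop
      exact this.integrableOn_Ioc
    have i3 : Integrable (fun z : ℝ × ℝ => cexp (I * (z.2 * (v - z.1) : ℝ)) *
        (((β z.1 * Real.exp (-(ε * z.1)) : ℝ) : ℂ) * ((1 - |z.2| / L : ℝ) : ℂ)))
        ((volume.restrict (Ioi 0)).prod (volume.restrict (Ioc (-L) L))) := by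
      refine Integrable.bdd_mul (c := 1) (i1.mul_prod i2) ?_ ?_
      · apply Continuous.aestronglyMeasurable; fun_prop
      · refine Eventually.of_forall fun z => ?_
        rw [mul_comm, Complex.norm_exp_ofReal_mul_I]
    have sw := integral_integral_swap (f := fun u t => cexp (I * (t * (v - u) : ℝ)) *
        (((β u * Real.exp (-(ε * u)) : ℝ) : ℂ) * ((1 - |t| / L : ℝ) : ℂ))) i3
    have l1 : ∀ u : ℝ, ∫ t in Ioc (-L) L, cexp (I * (t * (v - u) : ℝ)) *
        (((β u * Real.exp (-(ε * u)) : ℝ) : ℂ) * ((1 - |t| / L : ℝ) : ℂ)) =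
        ((β u * Real.exp (-(ε * u)) * (L * fejK (L * (v - u))) : ℝ) : ℂ) := by
      intro u
      rw [ofReal_mul (β u * Real.exp (-(ε * u))) (L * fejK (L * (v - u))), ← fej_fourier_scaled L hL,
        ← integral_const_mul]
      congr 1; ext t; ring
    have l2 : ∀ t : ℝ, ∫ u in Ioi (0:ℝ), cexp (I * (t * (v - u) : ℝ)) *
        (((β u * Real.exp (-(ε * u)) : ℝ) : ℂ) * ((1 - |t| / L : ℝ) : ℂ)) =
        ((1 - |t| / L : ℝ) : ℂ) * cexp (I * (t * v : ℝ)) * H (ε + I * t) := by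
      intro t
      rw [← hLap _ (by simpa using hε), ← integral_const_mul]
      congr 1; ext u
      push_cast
      have : cexp (I * (t * (v - u))) * cexp (-(ε * u)) = cexp (I * (t * v)) * cexp (-((ε + I * t) * u)) := by
        rw [← Complex.exp_add, ← Complex.exp_add]; congr 1; ring
      linear_combination (β u : ℂ) * (1 - (|t| : ℝ) / L) * this
    simp_rw [l1, l2] at sw
    exact sw
  -- let ε tend to zero
  have lim : ∀ v : ℝ, ((∫ u in Ioi (0:ℝ), β u * (L * fejK (L * (v - u))) : ℝ) : ℂ) =
      ∫ t in Ioc (-L) L, ((1 - |t| / L : ℝ) : ℂ) * cexp (I * (t * v : ℝ)) * H (I * t) := by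
    intro v
    have hε : Tendsto (fun n : ℕ => 1 / ((n : ℝ) + 1)) atTop (𝓝 0) :=
      tendsto_one_div_add_atTop_nhds_zero_nat
    have hεpos : ∀ n : ℕ, 0 < 1 / ((n : ℝ) + 1) := fun n => by positivity
    have hεle : ∀ n : ℕ, 1 / ((n : ℝ) + 1) ≤ 1 := fun n => by
      rw [div_le_one (by positivity)]; linarith [(Nat.cast_nonneg n : (0:ℝ) ≤ n)]
    have t1 : Tendsto (fun n : ℕ => ∫ u in Ioi (0:ℝ),
        ((β u * Real.exp (-((1 / ((n : ℝ) + 1)) * u)) * (L * fejK (L * (v - u))) : ℝ) : ℂ)) atTop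
        (𝓝 (∫ u in Ioi (0:ℝ), ((β u * (L * fejK (L * (v - u))) : ℝ) : ℂ))) := by
      refine tendsto_integral_of_dominated_convergence
        (fun u => M * (L * fejK (L * (v - u)))) ?_ ((hkint v).const_mul M).restrict ?_ ?_
      · intro n
        apply Measurable.aestronglyMeasurable
        have := fejK_measurable
        fun_prop
      · intro n
        refine (ae_restrict_mem measurableSet_Ioi).mono fun u hu => ?_
        have hk : 0 ≤ L * fejK (L * (v - u)) := mul_nonneg hL.le (fejK_nonneg _)
        rw [norm_real, norm_mul, norm_mul, Real.norm_of_nonneg hk, Real.norm_eq_abs, Real.norm_eq_abs,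
          Real.abs_exp]
        gcongr
        have : Real.exp (-((1 / ((n : ℝ) + 1)) * u)) ≤ 1 := by
          rw [Real.exp_le_one_iff]
          have := mul_nonneg (hεpos n).le (le_of_lt (mem_Ioi.1 hu))
          linarith
        calc |β u| * _ ≤ M * 1 := by gcongr; exact hM u
          _ = M := mul_one M
      · refine Eventually.of_forall fun u => ?_
        have : Tendsto (fun n : ℕ => β u * Real.exp (-((1 / ((n : ℝ) + 1)) * u)) * (L * fejK (L * (v - u))))
            atTop (𝓝 (β u * Real.exp (-(0 * u)) * (L * fejK (L * (v - u))))) :=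
          ((((hε.mul_const u).neg).rexp).const_mul _).mul_const _
        simp only [zero_mul, neg_zero, Real.exp_zero, mul_one] at this
        exact (continuous_ofReal.tendsto _).comp this
    have hcomp : IsCompact ((fun z : ℝ × ℝ => (z.1 : ℂ) + I * z.2) '' (Icc 0 1 ×ˢ Icc (-L) L)) :=
      (isCompact_Icc.prod isCompact_Icc).image (by fun_prop)
    obtain ⟨C, hC⟩ := hcomp.exists_bound_of_continuousOn (f := H) (hH.mono (by
      rintro _ ⟨z, hz, rfl⟩
      simpa using hz.1.1))
    have hC' : ∀ x t : ℝ, x ∈ Icc (0:ℝ) 1 → t ∈ Icc (-L) L → ‖H (x + I * t)‖ ≤ C := fun x t hx ht =>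
      hC _ ⟨(x, t), ⟨hx, ht⟩, rfl⟩
    have hC0 : 0 ≤ C := (norm_nonneg _).trans (hC' 0 0 (by simp) (by simp [hL.le]))
    have hHc : ∀ x : ℝ, 0 ≤ x → Continuous (fun t : ℝ => H (x + I * t)) := by
      intro x hx
      have : ContinuousOn (fun t : ℝ => H (x + I * t)) univ :=
        hH.comp (by fun_prop) (fun t _ => by simpa using hx)
      exact continuousOn_univ.1 this
    have t2 : Tendsto (fun n : ℕ => ∫ t in Ioc (-L) L, ((1 - |t| / L : ℝ) : ℂ) *
        cexp (I * (t * v : ℝ)) * H (((1 / ((n : ℝ) + 1) : ℝ) : ℂ) + I * t)) atTop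
        (𝓝 (∫ t in Ioc (-L) L, ((1 - |t| / L : ℝ) : ℂ) * cexp (I * (t * v : ℝ)) * H (I * t))) := by
      refine tendsto_integral_of_dominated_convergence (fun _ => C) ?_ (by simp) ?_ ?_
      · intro n
        have := hHc _ (hεpos n).le
        apply Continuous.aestronglyMeasurable
        exact Continuous.mul (by fun_prop) this
      · intro n
        refine (ae_restrict_mem measurableSet_Ioc).mono fun t ht => ?_
        rw [norm_mul, norm_mul, mul_comm I, norm_exp_ofReal_mul_I, mul_one, norm_real, mul_comm]
        have h1 : ‖1 - |t| / L‖ ≤ 1 := by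
          have : |t| / L ≤ 1 := by
            rw [div_le_one hL]; exact abs_le.2 ⟨ht.1.le, ht.2⟩
          have : 0 ≤ |t| / L := by positivity
          rw [Real.norm_eq_abs, abs_le]; constructor <;> linarith
        calc _ ≤ C * 1 := by
              gcongr
              exact hC' _ _ ⟨(hεpos n).le, hεle n⟩ ⟨ht.1.le, ht.2⟩
          _ = C := mul_one C
      · refine Eventually.of_forall fun t => ?_
        apply Tendsto.const_mul
        have hw : Tendsto H (𝓝[{s | 0 ≤ s.re}] (I * t)) (𝓝 (H (I * t))) := hH (I * t) (by simp)
        apply hw.comp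
        refine tendsto_nhdsWithin_iff.2 ⟨?_, Eventually.of_forall fun n => ?_⟩
        · have := ((continuous_ofReal.tendsto 0).comp hε).add_const (I * (t:ℂ))
          simpa using this
        · simp only [mem_ofPred_eq, add_re, ofReal_re, mul_re, I_re, zero_mul, I_im, ofReal_im, mul_zero,
            sub_zero, add_zero]
          exact (hεpos n).le
    have t3 := t1.congr (fun n => fub _ (hεpos n) v)
    rw [← tendsto_nhds_unique t3 t2]
    exact integral_ofReal.symm
  -- Riemann–Lebesgue
  have RL := Real.tendsto_integral_exp_smul_cocompact
    (indicator (Ioc (-L) L) (fun t : ℝ => ((1 - |t| / L : ℝ) : ℂ) * H (I * t)))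
  have hsc : Tendsto (fun v : ℝ => -(v / (2 * Real.pi))) atTop (cocompact ℝ) := by
    have : Tendsto (fun v : ℝ => -(v / (2 * Real.pi))) atTop atBot :=
      tendsto_neg_atTop_atBot.comp (tendsto_id.atTop_div_const (by positivity))
    exact this.mono_right atBot_le_cocompact
  have RL2 := RL.comp hsc
  have key : Tendsto (fun v : ℝ => ((∫ u in Ioi (0:ℝ), β u * (L * fejK (L * (v - u))) : ℝ) : ℂ))
      atTop (𝓝 0) := by
    refine RL2.congr fun v => ?_
    rw [lim v, ← integral_indicator measurableSet_Ioc]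
    simp only [Function.comp]
    congr 1
    ext t
    by_cases ht : t ∈ Ioc (-L) L
    · simp only [indicator_of_mem ht, Circle.smul_def, Real.fourierChar_apply, smul_eq_mul]
      have : (2 * Real.pi * -(t * -(v / (2 * Real.pi))) : ℝ) = t * v := by
        field_simp
      rw [this, mul_comm I]
      ring
    · simp [indicator_of_notMem ht]
  exact (continuous_re.tendsto _).comp key

end TauberianKernel


section TauberianThm
open MeasureTheory Set Complex Topology

lemma fej_subst (L : ℝ) (hL : 0 < L) (v : ℝ) (S T : Set ℝ) (hS : MeasurableSet S)
    (hT : MeasurableSet T) (hST : ∀ u, u ∈ T ↔ L * (v - u) ∈ S) :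
    ∫ u in T, L * fejK (L * (v - u)) = ∫ w in S, fejK w := by
  rw [← integral_indicator hT, ← integral_indicator hS]
  have h1 : (T.indicator fun u => L * fejK (L * (v - u))) =
      fun u => (fun x => L * S.indicator fejK (L * x)) (v - u) := by
    ext u
    by_cases h : u ∈ T
    · simp [indicator_of_mem h, indicator_of_mem ((hST u).1 h)]
    · have h' : L * (v - u) ∉ S := fun h2 => h ((hST u).2 h2)
      simp [indicator_of_notMem h, indicator_of_notMem h']
  rw [h1, integral_sub_left_eq_self (fun x => L * S.indicator fejK (L * x)) volume v,
    integral_const_mul, Measure.integral_comp_mul_left, smul_eq_mul, abs_of_pos (by positivity),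
    ← mul_assoc, mul_inv_cancel₀ hL.ne', one_mul]

theorem tauberian (B : ℝ → ℝ) (hBm : Measurable B) (hB0 : ∀ u, 0 ≤ B u) (M : ℝ)
    (hBM : ∀ u, B u ≤ M) (hmono : Monotone (fun u => B u * Real.exp u)) (c : ℝ) (hc : 0 ≤ c)
    (H : ℂ → ℂ) (hH : ContinuousOn H {s | 0 ≤ s.re})
    (hLap : ∀ s : ℂ, 0 < s.re →
      ∫ u in Ioi (0:ℝ), ((B u - c : ℝ) : ℂ) * cexp (-(s * u)) = H s) :
    Tendsto B atTop (𝓝 c) := by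
  have hM0 : 0 ≤ M := (hB0 0).trans (hBM 0)
  have hkint : ∀ L : ℝ, 0 < L → ∀ v, Integrable (fun u => L * fejK (L * (v - u))) := fun L hL v =>
    ((fejK_integrable.comp_mul_left' hL.ne').comp_sub_left v).const_mul L
  have hk0 : ∀ L : ℝ, 0 < L → ∀ v u, 0 ≤ L * fejK (L * (v - u)) := fun L hL v u =>
    mul_nonneg hL.le (fejK_nonneg _)
  have hBkint : ∀ L : ℝ, 0 < L → ∀ v, Integrable (fun u => B u * (L * fejK (L * (v - u)))) := by
    intro L hL v
    refine Integrable.bdd_mul (c := M) (hkint L hL v) hBm.aestronglyMeasurable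
        (Eventually.of_forall fun u => by rw [Real.norm_of_nonneg (hB0 u)]; exact hBM u)
  set Itot := ∫ w, fejK w with hI
  have hIpos : 0 < Itot := fejK_integral_pos
  have step1 : ∀ L : ℝ, 0 < L → Tendsto (fun v => ∫ u in Ioi (0:ℝ), B u * (L * fejK (L * (v - u))))
      atTop (𝓝 (c * Itot)) := by
    intro L hL
    have t1 := tauberian_analytic (fun u => B u - c) (hBm.sub_const c) (M + c) (by
      intro u
      have := hB0 u; have := hBM u
      rw [abs_le]; constructor <;> linarith) H hH hLap L hL
    have t2 : Tendsto (fun v => ∫ u in Ioi (0:ℝ), (L * fejK (L * (v - u)))) atTop (𝓝 Itot) := by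
      have hcov : AECover volume atTop (fun v : ℝ => Iio (L * v)) :=
        aecover_Iio (tendsto_id.const_mul_atTop hL)
      have := hcov.integral_tendsto_of_countably_generated fejK_integrable
      refine this.congr fun v => ?_
      rw [fej_subst L hL v (Iio (L * v)) (Ioi 0) measurableSet_Iio measurableSet_Ioi]
      intro u
      simp only [mem_Ioi, mem_Iio]
      constructor
      · intro h; nlinarith
      · intro h
        by_contra h2
        push Not at h2
        nlinarith
    have t3 := t1.add (t2.const_mul c)
    rw [zero_add] at t3
    refine t3.congr fun v => ?_
    rw [← integral_const_mul, ← integral_add]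
    · congr 1; ext u; ring
    · have := ((hBkint L hL v).sub ((hkint L hL v).const_mul c)).restrict (s := Ioi 0)
      refine this.congr (Eventually.of_forall fun u => ?_)
      simp only [Pi.sub_apply]; ring
    · exact ((hkint L hL v).const_mul c).restrict
  have hJ : Tendsto (fun R : ℝ => ∫ w in Icc (-R) R, fejK w) atTop (𝓝 Itot) := by
    have hcov : AECover volume atTop (fun R : ℝ => Icc (-R) R) :=
      aecover_Icc tendsto_neg_atTop_atBot tendsto_id
    exact hcov.integral_tendsto_of_countably_generated fejK_integrable
  have hδ : Tendsto (fun R : ℝ => 2 * R⁻¹) atTop (𝓝 0) := by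
    simpa using tendsto_inv_atTop_zero.const_mul (2:ℝ)
  -- substitution on the short interval
  have hshort : ∀ R : ℝ, 0 < R → ∀ v : ℝ,
      ∫ u in Icc (v - R⁻¹) (v + R⁻¹), R ^ 2 * fejK (R ^ 2 * (v - u)) = ∫ w in Icc (-R) R, fejK w := by
    intro R hR v
    apply fej_subst _ (by positivity) _ _ _ measurableSet_Icc measurableSet_Icc
    intro u
    have e1 : R ^ 2 * R⁻¹ = R := by field_simp
    have hR2 : 0 < R ^ 2 := by positivity
    simp only [mem_Icc]
    constructor
    · rintro ⟨h1, h2⟩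
      constructor <;> nlinarith
    · rintro ⟨h1, h2⟩
      constructor
      · by_contra h; push Not at h; nlinarith
      · by_contra h; push Not at h; nlinarith
  have upper : ∀ η : ℝ, 0 < η → ∀ᶠ v in atTop, B v < c + η := by
    intro η hη
    have t : Tendsto (fun R : ℝ => (c + η) * Real.exp (-(2 * R⁻¹)) * ∫ w in Icc (-R) R, fejK w) atTop
        (𝓝 ((c + η) * Real.exp (-0) * Itot)) := ((hδ.neg.rexp).const_mul _).mul hJ
    have hlt : c * Itot < (c + η) * Real.exp (-0) * Itot := by
      simp only [neg_zero, Real.exp_zero, mul_one]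
      nlinarith
    obtain ⟨R, hR1, hR⟩ := ((t.eventually_const_lt hlt).and (eventually_gt_atTop 0)).exists
    have hL : 0 < R ^ 2 := by positivity
    have t2 : Tendsto (fun v => ∫ u in Ioi (0:ℝ), B u * (R ^ 2 * fejK (R ^ 2 * (v + R⁻¹ - u))))
      atTop (𝓝 (c * Itot)) := (step1 _ hL).comp (tendsto_atTop_add_const_right _ _ tendsto_id)
    filter_upwards [t2.eventually_lt_const hR1, eventually_gt_atTop 0] with v hv hv0
    have hsub : Icc v (v + 2 * R⁻¹) ⊆ Ioi 0 := fun u hu => lt_of_lt_of_le hv0 hu.1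
    have h1 : ∫ u in Icc v (v + 2 * R⁻¹), B u * (R ^ 2 * fejK (R ^ 2 * (v + R⁻¹ - u))) ≤
        ∫ u in Ioi (0:ℝ), B u * (R ^ 2 * fejK (R ^ 2 * (v + R⁻¹ - u))) :=
      setIntegral_mono_set (hBkint _ hL _).integrableOn
        (Eventually.of_forall fun u => mul_nonneg (hB0 u) (hk0 _ hL _ _))
        (HasSubset.Subset.eventuallyLE hsub)
    have h2 : ∫ u in Icc v (v + 2 * R⁻¹), (B v * Real.exp (-(2 * R⁻¹))) * (R ^ 2 * fejK (R ^ 2 * (v + R⁻¹ - u))) ≤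
        ∫ u in Icc v (v + 2 * R⁻¹), B u * (R ^ 2 * fejK (R ^ 2 * (v + R⁻¹ - u))) := by
      refine setIntegral_mono_on ((hkint _ hL _).const_mul _).integrableOn
        (hBkint _ hL _).integrableOn measurableSet_Icc fun u hu => ?_
      refine mul_le_mul_of_nonneg_right ?_ (hk0 _ hL _ _)
      have hm : B v * Real.exp v ≤ B u * Real.exp u := hmono hu.1
      calc B v * Real.exp (-(2 * R⁻¹)) ≤ B v * Real.exp (v - u) := by
            gcongr
            · exact hB0 v
            · linarith [hu.2]
        _ = (B v * Real.exp v) * Real.exp (-u) := by rw [mul_assoc, ← Real.exp_add]; rfl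
        _ ≤ (B u * Real.exp u) * Real.exp (-u) := by gcongr
        _ = B u := by rw [mul_assoc, ← Real.exp_add]; simp
    have h3 := hshort R hR (v + R⁻¹)
    rw [show v + R⁻¹ - R⁻¹ = v by ring, show v + R⁻¹ + R⁻¹ = v + 2 * R⁻¹ by ring] at h3
    rw [integral_const_mul, h3] at h2
    have h4 := (h2.trans h1).trans_lt hv
    have h5 : 0 ≤ Real.exp (-(2 * R⁻¹)) * ∫ w in Icc (-R) R, fejK w :=
      mul_nonneg (Real.exp_pos _).le (integral_nonneg fejK_nonneg)
    rw [mul_assoc, mul_assoc] at h4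
    exact lt_of_mul_lt_mul_right h4 h5
  have lower : ∀ η : ℝ, 0 < η → ∀ᶠ v in atTop, c - η < B v := by
    intro η hη
    have t : Tendsto (fun R : ℝ => (c - η) * (Real.exp (2 * R⁻¹) * Itot) +
        M * (Itot - ∫ w in Icc (-R) R, fejK w)) atTop
        (𝓝 ((c - η) * (Real.exp 0 * Itot) + M * (Itot - Itot))) :=
      (((hδ.rexp).mul_const _).const_mul _).add ((tendsto_const_nhds.sub hJ).const_mul M)
    have hlt : (c - η) * (Real.exp 0 * Itot) + M * (Itot - Itot) < c * Itot := by
      simp only [Real.exp_zero, one_mul, sub_self, mul_zero, add_zero]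
      nlinarith
    obtain ⟨R, hR1, hR⟩ := ((t.eventually_lt_const hlt).and (eventually_gt_atTop 0)).exists
    have hL : 0 < R ^ 2 := by positivity
    have t2 : Tendsto (fun v => ∫ u in Ioi (0:ℝ), B u * (R ^ 2 * fejK (R ^ 2 * (v - R⁻¹ - u))))
      atTop (𝓝 (c * Itot)) := (step1 _ hL).comp (tendsto_atTop_add_const_right _ _ tendsto_id)
    filter_upwards [t2.eventually_const_lt hR1] with v hv
    set T := Icc (v - 2 * R⁻¹) v with hT
    have h3 : ∫ u in T, R ^ 2 * fejK (R ^ 2 * (v - R⁻¹ - u)) = ∫ w in Icc (-R) R, fejK w := by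
      have h3 := hshort R hR (v - R⁻¹)
      rwa [show v - R⁻¹ - R⁻¹ = v - 2 * R⁻¹ by ring, show v - R⁻¹ + R⁻¹ = v by ring] at h3
    have htot : ∫ u, R ^ 2 * fejK (R ^ 2 * (v - R⁻¹ - u)) = Itot := by
      have := fej_subst (R ^ 2) hL (v - R⁻¹) univ univ MeasurableSet.univ MeasurableSet.univ (by simp)
      simpa using this
    have hcompl : ∫ u in Tᶜ, R ^ 2 * fejK (R ^ 2 * (v - R⁻¹ - u)) =
        Itot - ∫ w in Icc (-R) R, fejK w := by
      rw [← h3, ← htot, ← integral_add_compl (μ := volume) (s := T) measurableSet_Icc (hkint _ hL _)]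
      ring
    have h1 : ∫ u in Ioi (0:ℝ), B u * (R ^ 2 * fejK (R ^ 2 * (v - R⁻¹ - u))) ≤
        ∫ u, B u * (R ^ 2 * fejK (R ^ 2 * (v - R⁻¹ - u))) :=
      setIntegral_le_integral (hBkint _ hL _)
        (Eventually.of_forall fun u => mul_nonneg (hB0 u) (hk0 _ hL _ _))
    rw [← integral_add_compl (μ := volume) (s := T) measurableSet_Icc (hBkint _ hL _)] at h1
    have h4 : ∫ u in T, B u * (R ^ 2 * fejK (R ^ 2 * (v - R⁻¹ - u))) ≤
        ∫ u in T, (B v * Real.exp (2 * R⁻¹)) * (R ^ 2 * fejK (R ^ 2 * (v - R⁻¹ - u))) := by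
      refine setIntegral_mono_on (hBkint _ hL _).integrableOn
        ((hkint _ hL _).const_mul _).integrableOn measurableSet_Icc fun u hu => ?_
      refine mul_le_mul_of_nonneg_right ?_ (hk0 _ hL _ _)
      have hm : B u * Real.exp u ≤ B v * Real.exp v := hmono hu.2
      calc B u = (B u * Real.exp u) * Real.exp (-u) := by rw [mul_assoc, ← Real.exp_add]; simp
        _ ≤ (B v * Real.exp v) * Real.exp (-u) := by gcongr
        _ = B v * Real.exp (v - u) := by rw [mul_assoc, ← Real.exp_add]; rfl
        _ ≤ B v * Real.exp (2 * R⁻¹) := by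
            gcongr
            · exact hB0 v
            · linarith [hu.1]
    have h5 : ∫ u in Tᶜ, B u * (R ^ 2 * fejK (R ^ 2 * (v - R⁻¹ - u))) ≤
        ∫ u in Tᶜ, M * (R ^ 2 * fejK (R ^ 2 * (v - R⁻¹ - u))) := by
      refine setIntegral_mono_on (hBkint _ hL _).integrableOn
        ((hkint _ hL _).const_mul _).integrableOn measurableSet_Icc.compl fun u hu => ?_
      exact mul_le_mul_of_nonneg_right (hBM u) (hk0 _ hL _ _)
    rw [integral_const_mul, h3] at h4
    rw [integral_const_mul, hcompl] at h5
    have h6 : ∫ w in Icc (-R) R, fejK w ≤ Itot :=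
      setIntegral_le_integral fejK_integrable (Eventually.of_forall fejK_nonneg)
    have h7 : B v * Real.exp (2 * R⁻¹) * ∫ w in Icc (-R) R, fejK w ≤ B v * Real.exp (2 * R⁻¹) * Itot := by
      gcongr
      exact mul_nonneg (hB0 v) (Real.exp_pos _).le
    have h8 : (c - η) * (Real.exp (2 * R⁻¹) * Itot) < B v * (Real.exp (2 * R⁻¹) * Itot) := by
      rw [← mul_assoc (B v)]
      linarith
    exact lt_of_mul_lt_mul_right h8 (by positivity)
  rw [Metric.tendsto_atTop']
  intro η hη
  obtain ⟨N, hN⟩ := eventually_atTop.1 ((upper η hη).and (lower η hη))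
  refine ⟨N, fun v hv => ?_⟩
  obtain ⟨h1, h2⟩ := hN v hv.le
  rw [Real.dist_eq, abs_lt]
  constructor <;> linarith

end TauberianThm


section PrimesAP
open MeasureTheory Set Complex Topology
open ArithmeticFunction.vonMangoldt

/-- Summatory function of the von Mangoldt function on the class 1 mod q. -/
noncomputable def psiOne (q : ℕ) (x : ℝ) : ℝ :=
  ∑ k ∈ Finset.Icc 1 ⌊x⌋₊, residueClass (1 : ZMod q) k

lemma psiOne_nonneg (q : ℕ) (x : ℝ) : 0 ≤ psiOne q x :=
  Finset.sum_nonneg fun k _ => residueClass_nonneg _ k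

lemma psiOne_mono (q : ℕ) : Monotone (psiOne q) := by
  intro x y hxy
  apply Finset.sum_le_sum_of_subset_of_nonneg
  · exact Finset.Icc_subset_Icc_right (Nat.floor_mono hxy)
  · intro k _ _; exact residueClass_nonneg _ k

lemma psiOne_le (q : ℕ) (x : ℝ) (hx : 0 ≤ x) : psiOne q x ≤ (Real.log 4 + 4) * x := by
  refine le_trans ?_ (Chebyshev.psi_le_const_mul_self hx)
  exact Finset.sum_le_sum fun k _ => residueClass_le _ k

lemma psiOne_asymp (q : ℕ) [NeZero q] :
    Tendsto (fun x : ℝ => psiOne q x / x) atTop (𝓝 ((q.totient : ℝ)⁻¹)) := by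
  set c : ℝ := (q.totient : ℝ)⁻¹ with hc
  set B : ℝ → ℝ := fun u => psiOne q (Real.exp u) * Real.exp (-u) with hB
  have hB0 : ∀ u, 0 ≤ B u := fun u => mul_nonneg (psiOne_nonneg _ _) (Real.exp_pos _).le
  have hBM : ∀ u, B u ≤ Real.log 4 + 4 := by
    intro u
    calc B u ≤ (Real.log 4 + 4) * Real.exp u * Real.exp (-u) := by
          simp only [hB]; gcongr; exact psiOne_le q _ (Real.exp_pos u).le
      _ = _ := by rw [mul_assoc, ← Real.exp_add]; simp
  have hBm : Measurable B :=
    ((psiOne_mono q).measurable.comp Real.measurable_exp).mul (by fun_prop)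
  have key : Tendsto B atTop (𝓝 c) := by
    refine tauberian B hBm hB0 _ hBM ?_ c (by positivity)
      (fun s => (LFunctionResidueClassAux (1 : ZMod q) (s + 1) - c) / (s + 1)) ?_ ?_
    · have : (fun u => B u * Real.exp u) = fun u => psiOne q (Real.exp u) := by
        ext u; simp only [hB]; rw [mul_assoc, ← Real.exp_add]; simp
      rw [this]
      exact (psiOne_mono q).comp Real.exp_monotone
    · apply ContinuousOn.div
      · apply ContinuousOn.sub _ continuousOn_const
        exact (continuousOn_LFunctionResidueClassAux (1 : ZMod q)).comp (by fun_prop)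
          (fun s hs => by simpa using hs)
      · fun_prop
      · intro s hs h
        have := congrArg re h
        simp only [add_re, one_re, zero_re] at this
        have h2 : 0 ≤ s.re := hs
        linarith
    · intro s hs
      have hO : (fun n : ℕ => ∑ k ∈ Finset.Icc 1 n, residueClass (1 : ZMod q) k) =O[atTop]
          fun n : ℕ => (n : ℝ) ^ (1 : ℝ) := by
        refine Asymptotics.IsBigO.of_bound (Real.log 4 + 4) (Eventually.of_forall fun n => ?_)
        have h1 := psiOne_le q n (Nat.cast_nonneg n)
        have h2 := psiOne_nonneg q n
        simp only [psiOne, Nat.floor_natCast] at h1 h2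
        rw [Real.norm_of_nonneg h2, Real.rpow_one, Real.norm_of_nonneg (Nat.cast_nonneg n)]
        exact h1
      have hL := LSeries_eq_mul_integral_of_nonneg (residueClass (1 : ZMod q)) zero_le_one
        (s := s + 1) (by simpa using hs) hO (residueClass_nonneg _)
      have hE := eqOn_LFunctionResidueClassAux (q := q) (a := 1) isUnit_one
        (show s + 1 ∈ {s : ℂ | 1 < s.re} by simpa using hs)
      simp only [add_sub_cancel_right] at hE
      have him : Real.exp '' Ioi 0 = Ioi 1 := by
        ext y
        simp only [mem_image, mem_Ioi]
        constructor
        · rintro ⟨x, hx, rfl⟩; exact Real.one_lt_exp_iff.2 hx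
        · intro hy; exact ⟨Real.log y, Real.log_pos hy, Real.exp_log (by linarith)⟩
      have hcv := integral_image_eq_integral_abs_deriv_smul (f := Real.exp) (f' := Real.exp)
        (measurableSet_Ioi (a := (0:ℝ))) (fun x _ => (Real.hasDerivAt_exp x).hasDerivWithinAt)
        Real.exp_injective.injOn
        (fun t : ℝ => (∑ k ∈ Finset.Icc 1 ⌊t⌋₊, (residueClass (1 : ZMod q) k : ℂ)) * (t : ℂ) ^ (-(s + 1 + 1)))
      rw [him] at hcv
      have hcv2 : ∫ x in Ioi (0:ℝ), |Real.exp x| • ((∑ k ∈ Finset.Icc 1 ⌊Real.exp x⌋₊,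
          (residueClass (1 : ZMod q) k : ℂ)) * ((Real.exp x : ℝ) : ℂ) ^ (-(s + 1 + 1))) =
          ∫ u in Ioi (0:ℝ), (B u : ℂ) * cexp (-s * u) := by
        congr 1
        ext u
        have e1 : ((Real.exp u : ℝ) : ℂ) ^ (-(s + 1 + 1)) = cexp (u * -(s + 1 + 1)) := by
          rw [cpow_def_of_ne_zero (by exact_mod_cast (Real.exp_pos u).ne'), ← ofReal_log (Real.exp_pos u).le,
            Real.log_exp]
        rw [e1, real_smul, abs_of_pos (Real.exp_pos u)]
        simp only [hB, psiOne]
        push_cast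
        have e2 : cexp u * cexp (u * -(s + 1 + 1)) = cexp (-u) * cexp (-s * u) := by
          rw [← Complex.exp_add, ← Complex.exp_add]; congr 1; ring
        linear_combination (∑ k ∈ Finset.Icc 1 ⌊Real.exp u⌋₊,
          (residueClass (1 : ZMod q) k : ℂ)) * e2
      rw [hcv, hcv2] at hL
      have i1 : Integrable (fun u : ℝ => cexp (-s * u)) (volume.restrict (Ioi 0)) :=
        integrableOn_exp_mul_complex_Ioi (by simpa using hs) 0
      have i2 : Integrable (fun u : ℝ => (B u : ℂ) * cexp (-s * u)) (volume.restrict (Ioi 0)) := by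
        refine Integrable.bdd_mul (c := Real.log 4 + 4) i1 (by fun_prop)
          (Eventually.of_forall fun u => ?_)
        rw [norm_real, Real.norm_of_nonneg (hB0 u)]; exact hBM u
      have i3 : ∫ u in Ioi (0:ℝ), ((B u - c : ℝ) : ℂ) * cexp (-(s * u)) =
          (∫ u in Ioi (0:ℝ), (B u : ℂ) * cexp (-s * u)) - c * ∫ u in Ioi (0:ℝ), cexp (-s * u) := by
        rw [← integral_const_mul, ← integral_sub i2 (i1.const_mul _)]
        congr 1; ext u; push_cast; rw [neg_mul]; ring
      rw [i3, integral_exp_mul_complex_Ioi (by simpa using hs)]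
      have hs0 : s ≠ 0 := by rintro rfl; simp at hs
      have hs1 : s + 1 ≠ 0 := by
        intro h
        have := congrArg re h
        simp only [add_re, one_re, zero_re] at this
        linarith
      rw [hE, hL]
      have : ((q.totient : ℂ)⁻¹) = (c : ℂ) := by simp [hc]
      rw [this]
      simp only [ofReal_zero, mul_zero, Complex.exp_zero]
      field_simp
      ring
  refine (key.comp Real.tendsto_log_atTop).congr' ?_
  filter_upwards [eventually_gt_atTop 0] with x hx
  simp only [Function.comp, hB]
  rw [Real.exp_neg, Real.exp_log hx, div_eq_mul_inv]

/-- The number of primes up to `n` congruent to 1 modulo `q`. -/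
noncomputable def piOne (q n : ℕ) : ℕ :=
  ((Finset.Icc 1 n).filter fun k : ℕ => k.Prime ∧ (k : ZMod q) = 1).card


lemma thetaOne_asymp (q : ℕ) [NeZero q] :
    Tendsto (fun n : ℕ => (∑ k ∈ (Finset.Icc 1 n).filter
      (fun k : ℕ => k.Prime ∧ (k : ZMod q) = 1), Real.log k) / n) atTop (𝓝 ((q.totient : ℝ)⁻¹)) := by
  have h1 : Tendsto (fun n : ℕ => psiOne q n / n) atTop (𝓝 ((q.totient : ℝ)⁻¹)) :=
    (psiOne_asymp q).comp tendsto_natCast_atTop_atTop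
  have h2 : Tendsto (fun n : ℕ => (2 * √(n:ℝ) * Real.log n) / n) atTop (𝓝 0) := by
    have h := (isLittleO_log_rpow_atTop (show (0:ℝ) < 1 / 2 by norm_num)).tendsto_div_nhds_zero
    have h' := (h.comp tendsto_natCast_atTop_atTop).const_mul 2
    rw [mul_zero] at h'
    refine h'.congr' ?_
    filter_upwards [eventually_gt_atTop 0] with n hn
    have hn' : (0:ℝ) < n := by exact_mod_cast hn
    simp only [Function.comp]
    rw [← Real.sqrt_eq_rpow]
    have : √(n:ℝ) * √(n:ℝ) = n := Real.mul_self_sqrt hn'.le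
    have h0 : 0 < √(n:ℝ) := Real.sqrt_pos.2 hn'
    field_simp
    rw [sq, this]
  have hlow : Tendsto (fun n : ℕ => psiOne q n / n - (2 * √(n:ℝ) * Real.log n) / n) atTop
      (𝓝 ((q.totient : ℝ)⁻¹)) := by simpa using h1.sub h2
  have eq1 : ∀ n : ℕ, ∑ k ∈ (Finset.Icc 1 n).filter
      (fun k : ℕ => k.Prime ∧ (k : ZMod q) = 1), Real.log k =
      psiOne q n - ∑ k ∈ (Finset.Icc 1 n).filter (fun k => ¬ k.Prime), residueClass (1 : ZMod q) k := by
    intro n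
    rw [psiOne, Nat.floor_natCast, ← Finset.sum_filter_add_sum_filter_not (Finset.Icc 1 n) Nat.Prime,
      add_sub_cancel_right, ← Finset.filter_filter, Finset.sum_filter]
    refine Finset.sum_congr rfl fun k hk => ?_
    have hp := (Finset.mem_filter.1 hk).2
    simp only [residueClass, Set.indicator_apply, Set.mem_ofPred_eq,
      ArithmeticFunction.vonMangoldt_apply_prime hp]
  refine tendsto_of_tendsto_of_tendsto_of_le_of_le' hlow h1 ?_ ?_
  · filter_upwards [eventually_ge_atTop 1] with n hn
    rw [eq1, ← sub_div]
    gcongr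
    have h3 := Chebyshev.psi_sub_theta_le (x := n) (by exact_mod_cast hn)
    rw [Chebyshev.psi_sub_theta_eq_sum_not_prime, Nat.floor_natCast] at h3
    refine le_trans ?_ h3
    exact Finset.sum_le_sum fun k _ => residueClass_le _ k
  · refine Eventually.of_forall fun n => ?_
    rw [eq1]
    gcongr
    have : 0 ≤ ∑ k ∈ (Finset.Icc 1 n).filter (fun k => ¬ k.Prime), residueClass (1 : ZMod q) k :=
      Finset.sum_nonneg fun k _ => residueClass_nonneg _ k
    linarith

lemma piOne_asymp (q : ℕ) [NeZero q] :
    Tendsto (fun n : ℕ => (piOne q n : ℝ) * Real.log n / n) atTop (𝓝 ((q.totient : ℝ)⁻¹)) := by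

  set c : ℝ := (q.totient : ℝ)⁻¹ with hc
  have hc0 : 0 ≤ c := by positivity
  have hθ := thetaOne_asymp q
  set θ : ℕ → ℝ := fun n => ∑ k ∈ (Finset.Icc 1 n).filter
      (fun k : ℕ => k.Prime ∧ (k : ZMod q) = 1), Real.log k with hθdef
  have hpi : ∀ n, (piOne q n : ℝ) = ∑ k ∈ (Finset.Icc 1 n).filter
      (fun k : ℕ => k.Prime ∧ (k : ZMod q) = 1), (1:ℝ) := by
    intro n
    simp only [piOne, Finset.sum_const, nsmul_eq_mul, mul_one]
  have low : ∀ n : ℕ, θ n ≤ piOne q n * Real.log n := by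
    intro n
    rw [hpi, Finset.sum_mul]
    refine Finset.sum_le_sum fun k hk => ?_
    have := Finset.mem_Icc.1 (Finset.mem_filter.1 hk).1
    rw [one_mul]
    apply Real.log_le_log
    · exact_mod_cast this.1
    · exact_mod_cast this.2
  have up : ∀ ε : ℝ, 0 < ε → ε < 1 → ∀ n : ℕ, 1 ≤ n →
      piOne q n * Real.log n / n ≤ (n:ℝ) ^ (-ε) * Real.log n + (θ n / n) / (1 - ε) := by
    intro ε h0 h1 n hn
    have hn' : (1:ℝ) ≤ n := by exact_mod_cast hn
    have hlog : 0 ≤ Real.log n := Real.log_nonneg hn'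
    have claim : (piOne q n : ℝ) * ((1 - ε) * Real.log n) ≤
        (n:ℝ) ^ (1 - ε) * ((1 - ε) * Real.log n) + θ n := by
      have hsplit : (piOne q n : ℝ) * ((1 - ε) * Real.log n) ≤
          ∑ k ∈ (Finset.Icc 1 n).filter (fun k : ℕ => k.Prime ∧ (k : ZMod q) = 1),
            ((if (k:ℝ) ≤ (n:ℝ) ^ (1 - ε) then (1 - ε) * Real.log n else 0) + Real.log k) := by
        rw [hpi, Finset.sum_mul]
        refine Finset.sum_le_sum fun k hk => ?_
        have hk1 := Finset.mem_Icc.1 (Finset.mem_filter.1 hk).1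
        have hk1' : (1:ℝ) ≤ k := by exact_mod_cast hk1.1
        split_ifs with h
        · linarith [Real.log_nonneg hk1']
        · push Not at h
          have := Real.log_le_log (by positivity) h.le
          rw [Real.log_rpow (by linarith)] at this
          linarith
      refine hsplit.trans ?_
      rw [Finset.sum_add_distrib]
      gcongr
      · rw [← Finset.sum_filter, Finset.sum_const, nsmul_eq_mul]
        refine mul_le_mul_of_nonneg_right ?_ (mul_nonneg (by linarith) hlog)
        · have : (Finset.filter (fun k : ℕ => (k:ℝ) ≤ (n:ℝ) ^ (1 - ε)) ((Finset.Icc 1 n).filter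
              (fun k : ℕ => k.Prime ∧ (k : ZMod q) = 1))) ⊆ Finset.Icc 1 ⌊(n:ℝ) ^ (1 - ε)⌋₊ := by
            intro k hk
            rw [Finset.mem_filter, Finset.mem_filter, Finset.mem_Icc] at hk
            rw [Finset.mem_Icc]
            exact ⟨hk.1.1.1, Nat.le_floor hk.2⟩
          have h3 := Finset.card_le_card this
          rw [Nat.card_Icc, Nat.add_sub_cancel] at h3
          calc _ ≤ ((⌊(n:ℝ) ^ (1 - ε)⌋₊ : ℕ) : ℝ) := by exact_mod_cast h3
            _ ≤ _ := Nat.floor_le (by positivity)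
    have e : (n:ℝ) ^ (1 - ε) = (n:ℝ) ^ (-ε) * n := by
      rw [show 1 - ε = -ε + 1 by ring, Real.rpow_add (by linarith), Real.rpow_one]
    rw [e] at claim
    have h1' : 0 < 1 - ε := by linarith
    rw [div_le_iff₀ (by linarith), add_mul, div_mul_eq_mul_div, div_mul_cancel₀ _ (by linarith),
      ← sub_le_iff_le_add', le_div_iff₀ h1']
    linarith
  have hlow : ∀ η : ℝ, 0 < η → ∀ᶠ n : ℕ in atTop, c - η < piOne q n * Real.log n / n := by
    intro η hη
    filter_upwards [hθ.eventually_const_lt (show c - η < c by linarith)] with n hn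
    refine hn.trans_le ?_
    gcongr
    exact low n
  have hup : ∀ η : ℝ, 0 < η → ∀ᶠ n : ℕ in atTop, piOne q n * Real.log n / n < c + η := by
    intro η hη
    have t : Tendsto (fun ε : ℝ => c / (1 - ε)) (𝓝[>] 0) (𝓝 (c / (1 - 0))) := by
      apply Tendsto.mono_left _ nhdsWithin_le_nhds
      apply Tendsto.div tendsto_const_nhds (tendsto_const_nhds.sub tendsto_id)
      norm_num
    rw [sub_zero, div_one] at t
    obtain ⟨ε, h1, h2⟩ := ((t.eventually_lt_const (show c < c + η by linarith)).and
      (Ioo_mem_nhdsGT (show (0:ℝ) < 1 by norm_num))).exists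
    have t2 : Tendsto (fun n : ℕ => (n:ℝ) ^ (-ε) * Real.log n + (θ n / n) / (1 - ε)) atTop
        (𝓝 (0 + c / (1 - ε))) := by
      refine Tendsto.add ?_ (hθ.div_const _)
      have h := (isLittleO_log_rpow_atTop h2.1).tendsto_div_nhds_zero
      refine (h.comp tendsto_natCast_atTop_atTop).congr fun n => ?_
      simp only [Function.comp]
      rw [Real.rpow_neg (Nat.cast_nonneg n), div_eq_inv_mul]
    rw [zero_add] at t2
    filter_upwards [t2.eventually_lt_const h1, eventually_ge_atTop 1] with n hn hn1
    exact (up ε h2.1 h2.2 n hn1).trans_lt hn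
  rw [Metric.tendsto_atTop]
  intro η hη
  obtain ⟨N, hN⟩ := eventually_atTop.1 ((hup η hη).and (hlow η hη))
  refine ⟨N, fun v hv => ?_⟩
  obtain ⟨h1, h2⟩ := hN v hv
  rw [Real.dist_eq, abs_lt]
  constructor <;> linarith

end PrimesAP


section UpperBound
open Finset

lemma factorial_dvd_prog (d n : ℕ) (hd : 1 ≤ d) :
    n.factorial ∣ d ^ n * ∏ k ∈ Icc 1 n, (1 + k * d) := by
  rw [Nat.dvd_iff_prime_pow_dvd_dvd]
  intro p e hp hpe
  by_cases hpd : p ∣ d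
  · have hle : e ≤ n := by
      have := Fact.mk hp
      have h1 : e ≤ padicValNat p n.factorial :=
        (padicValNat_dvd_iff_le n.factorial_ne_zero).1 hpe
      have h2 := sub_one_mul_padicValNat_factorial (p := p) n
      have h3 : 1 * padicValNat p n.factorial ≤ (p - 1) * padicValNat p n.factorial :=
        Nat.mul_le_mul_right _ (by have := hp.two_le; omega)
      omega
    exact Dvd.dvd.mul_right ((pow_dvd_pow p hle).trans (pow_dvd_pow_of_dvd hpd n)) _
  · apply Dvd.dvd.mul_left
    have hcop : Nat.Coprime d (p ^ e) := (Nat.Coprime.pow_left e ((Nat.Prime.coprime_iff_not_dvd hp).2 hpd)).symm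
    obtain ⟨m, hm⟩ : ∃ m : ℕ, d * m ≡ 1 [MOD p ^ e] := by
      have : NeZero (p ^ e) := ⟨(Nat.pow_pos hp.pos).ne'⟩
      refine ⟨((d : ZMod (p ^ e))⁻¹).val, ?_⟩
      rw [← ZMod.natCast_eq_natCast_iff]
      push_cast
      rw [ZMod.natCast_zmod_val, ZMod.coe_mul_inv_eq_one d hcop]
    have h1 : p ^ e ∣ ∏ k ∈ Icc 1 n, (m + k) := by
      have : ∏ k ∈ Icc 1 n, (m + k) = (m + 1).ascFactorial n := by
        clear hpe
        induction n with
        | zero => simp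
        | succ n ih =>
          rw [prod_Icc_succ_top (by omega), ih, Nat.ascFactorial_succ]
          ring
      rw [this]
      exact hpe.trans (Nat.factorial_dvd_ascFactorial _ _)
    have h2 : ∏ k ∈ Icc 1 n, (1 + k * d) ≡ ∏ k ∈ Icc 1 n, (d * (m + k)) [MOD p ^ e] := by
      apply Nat.ModEq.prod
      intro k _
      have := (hm.symm).add_right (k * d)
      rw [show d * (m + k) = d * m + k * d by ring]
      exact this
    have h3 : p ^ e ∣ ∏ k ∈ Icc 1 n, (d * (m + k)) := by
      rw [prod_mul_distrib]
      exact h1.mul_left _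
    exact (h2.dvd_iff dvd_rfl).2 h3

lemma prod_Icc_id_factorial (n : ℕ) : ∏ k ∈ Icc 1 n, k = n.factorial := by
  induction n with
  | zero => simp
  | succ n ih => rw [prod_Icc_succ_top (by omega), ih, Nat.factorial_succ, mul_comm]

lemma prod_primes_prog_le (d n : ℕ) (hd : 1 ≤ d) :
    ∏ k ∈ (Icc 1 n).filter (fun k => (1 + k * d).Prime ∧ n < 1 + k * d), (1 + k * d) ≤
      (d * (d + 1)) ^ n := by
  set S := (Icc 1 n).filter (fun k => (1 + k * d).Prime ∧ n < 1 + k * d) with hS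
  have h1 : ∏ k ∈ S, (1 + k * d) ∣ d ^ n * ∏ k ∈ Icc 1 n, (1 + k * d) :=
    (prod_dvd_prod_of_subset _ _ _ (filter_subset _ _)).mul_left _
  have h2 : Nat.Coprime n.factorial (∏ k ∈ S, (1 + k * d)) := by
    apply Nat.Coprime.prod_right
    intro k hk
    obtain ⟨_, hp, hlt⟩ := mem_filter.1 hk
    exact (hp.coprime_factorial_of_lt hlt).symm
  have h3 := h2.mul_dvd_of_dvd_of_dvd (factorial_dvd_prog d n hd) h1
  have hpos : 0 < d ^ n * ∏ k ∈ Icc 1 n, (1 + k * d) :=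
    Nat.mul_pos (Nat.pow_pos hd) (prod_pos fun k _ => by omega)
  have h4 := Nat.le_of_dvd hpos h3
  have h5 : ∏ k ∈ Icc 1 n, (1 + k * d) ≤ n.factorial * (d + 1) ^ n := by
    calc ∏ k ∈ Icc 1 n, (1 + k * d) ≤ ∏ k ∈ Icc 1 n, (k * (d + 1)) := by
          apply prod_le_prod' 
          intro k hk
          have := (mem_Icc.1 hk).1
          nlinarith
      _ = n.factorial * (d + 1) ^ n := by
          rw [prod_mul_distrib, prod_Icc_id_factorial]; simp
  have h6 : n.factorial * ∏ k ∈ S, (1 + k * d) ≤ n.factorial * (d * (d + 1)) ^ n := by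
    calc _ ≤ _ := h4
      _ ≤ d ^ n * (n.factorial * (d + 1) ^ n) := by gcongr
      _ = _ := by rw [mul_pow]; ring
  exact Nat.le_of_mul_le_mul_left h6 n.factorial_pos

lemma mem_one_mod {d p : ℕ} (hp : 1 ≤ p) : (p : ZMod d) = 1 ↔ d ∣ p - 1 := by
  rw [← ZMod.natCast_eq_zero_iff, Nat.cast_sub hp, sub_eq_zero, Nat.cast_one]

/-- Primes up to `x` that are 1 mod `d`, sum of logarithms. -/
lemma theta_prog_le (d x : ℕ) (hd : 1 ≤ d) :
    ∑ p ∈ (Icc 1 x).filter (fun k : ℕ => k.Prime ∧ (k : ZMod d) = 1), Real.log p ≤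
      (x / d : ℝ) * (Real.log 4 + Real.log (d * (d + 1))) := by
  set n := x / d with hn
  have hnx : (n : ℝ) ≤ (x / d : ℝ) := Nat.cast_div_le
  set S := (Icc 1 n).filter (fun k => (1 + k * d).Prime ∧ n < 1 + k * d) with hS
  have hsub : (Icc 1 x).filter (fun k : ℕ => k.Prime ∧ (k : ZMod d) = 1) ⊆
      (Ioc 0 n).filter Nat.Prime ∪ S.image (fun k => 1 + k * d) := by
    intro p hp
    rw [mem_filter, mem_Icc] at hp
    obtain ⟨⟨h1, h2⟩, h3, h4⟩ := hp
    rw [mem_one_mod h1] at h4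
    rw [mem_union, mem_filter, mem_Ioc, mem_image]
    by_cases h : p ≤ n
    · left; exact ⟨⟨h1, h⟩, h3⟩
    · right
      obtain ⟨k, hk⟩ := h4
      have hpk : 1 + k * d = p := by rw [mul_comm]; omega
      refine ⟨k, ?_, hpk⟩
      rw [hS, mem_filter, mem_Icc, hpk]
      refine ⟨⟨?_, ?_⟩, h3, by omega⟩
      · rcases Nat.eq_zero_or_pos k with rfl | hk0
        · have := h3.two_le; simp at hpk; omega
        · exact hk0
      · rw [hn, Nat.le_div_iff_mul_le hd]; omega
  have hpos : ∀ p ∈ (Ioc 0 n).filter Nat.Prime ∪ S.image (fun k => 1 + k * d), 0 ≤ Real.log (p:ℝ) :=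
    fun p _ => Real.log_natCast_nonneg p
  have h1 := sum_le_sum_of_subset_of_nonneg (f := fun p : ℕ => Real.log p) hsub
    (fun p hp _ => hpos p hp)
  have h2 : ∑ p ∈ (Ioc 0 n).filter Nat.Prime ∪ S.image (fun k => 1 + k * d), Real.log (p:ℝ) ≤
      ∑ p ∈ (Ioc 0 n).filter Nat.Prime, Real.log (p:ℝ) + ∑ p ∈ S.image (fun k => 1 + k * d), Real.log (p:ℝ) := by
    rw [← sum_union_inter]
    have : 0 ≤ ∑ p ∈ (Ioc 0 n).filter Nat.Prime ∩ S.image (fun k => 1 + k * d), Real.log (p:ℝ) :=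
      sum_nonneg fun p _ => Real.log_natCast_nonneg p
    linarith
  have h3 : ∑ p ∈ (Ioc 0 n).filter Nat.Prime, Real.log (p:ℝ) ≤ Real.log 4 * n := by
    have := Chebyshev.theta_le_log4_mul_x (x := n) (Nat.cast_nonneg n)
    rwa [Chebyshev.theta, Nat.floor_natCast] at this
  have h4 : ∑ p ∈ S.image (fun k => 1 + k * d), Real.log (p:ℝ) ≤ n * Real.log (d * (d + 1)) := by
    rw [sum_image (by
      intro a _ b _ hab
      have : a * d = b * d := by simpa using hab
      exact Nat.eq_of_mul_eq_mul_right hd this)]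
    rw [← Real.log_prod (fun k _ => by positivity)]
    rw [← Real.log_pow]
    apply Real.log_le_log
    · exact prod_pos fun k _ => by positivity
    · exact_mod_cast prod_primes_prog_le d n hd
  have hl : 0 ≤ Real.log 4 + Real.log ((d:ℝ) * (d + 1)) := by
    have : 0 ≤ Real.log ((d:ℝ) * (d + 1)) := by
      have := Real.log_natCast_nonneg (d * (d + 1))
      push_cast at this
      exact this
    have : 0 ≤ Real.log 4 := Real.log_nonneg (by norm_num)
    linarith
  calc _ ≤ (n : ℝ) * (Real.log 4 + Real.log (d * (d + 1))) := by linarith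
    _ ≤ _ := by gcongr

lemma piOne_bound (d x : ℕ) (hd : 1 ≤ d) (hx : 1 ≤ x) :
    (piOne d x : ℝ) * Real.log x ≤ 22 * (x / √d) := by
  have hx' : (1:ℝ) ≤ x := by exact_mod_cast hx
  have hd' : (1:ℝ) ≤ d := by exact_mod_cast hd
  have hlog : 0 ≤ Real.log x := Real.log_nonneg hx'
  set P := (Icc 1 x).filter (fun k : ℕ => k.Prime ∧ (k : ZMod d) = 1) with hP
  have h1 : (piOne d x : ℝ) * Real.log x ≤
      ∑ p ∈ P, ((if (p:ℝ) ≤ √x then Real.log x else 0) + 2 * Real.log p) := by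
    have : (piOne d x : ℝ) * Real.log x = ∑ p ∈ P, Real.log x := by
      simp [piOne, hP]
    rw [this]
    refine sum_le_sum fun p hp => ?_
    have hp1 := (mem_Icc.1 (mem_filter.1 hp).1).1
    have hp1' : (1:ℝ) ≤ p := by exact_mod_cast hp1
    have := Real.log_nonneg hp1'
    split_ifs with h
    · linarith
    · push Not at h
      have h2 := Real.log_le_log (Real.sqrt_pos.2 (by linarith)) h.le
      rw [Real.log_sqrt (by linarith)] at h2
      linarith
  rw [sum_add_distrib, ← mul_sum, ← sum_filter, sum_const, nsmul_eq_mul] at h1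
  have h2 := theta_prog_le d x hd
  have h3 : ((P.filter (fun p : ℕ => (p:ℝ) ≤ √x)).card : ℝ) ≤ √x / d := by
    have hsub : P.filter (fun p : ℕ => (p:ℝ) ≤ √x) ⊆ (Icc 1 ⌊√x / d⌋₊).image (fun k => 1 + k * d) := by
      intro p hp
      rw [mem_filter, hP, mem_filter, mem_Icc] at hp
      obtain ⟨⟨⟨h1, h2⟩, h3, h4⟩, h5⟩ := hp
      rw [mem_one_mod h1] at h4
      obtain ⟨k, hk⟩ := h4
      have hpk : 1 + k * d = p := by rw [mul_comm]; omega
      rw [mem_image]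
      refine ⟨k, ?_, hpk⟩
      rw [mem_Icc]
      constructor
      · rcases Nat.eq_zero_or_pos k with rfl | hk0
        · have := h3.two_le; simp at hpk; omega
        · exact hk0
      · apply Nat.le_floor
        rw [le_div_iff₀ (by linarith)]
        have : (1:ℝ) + k * d = p := by exact_mod_cast hpk
        linarith
    have := (card_le_card hsub).trans card_image_le
    rw [Nat.card_Icc, Nat.add_sub_cancel] at this
    calc _ ≤ ((⌊√x / d⌋₊ : ℕ) : ℝ) := by exact_mod_cast this
      _ ≤ _ := Nat.floor_le (by positivity)
  have lsq : ∀ y : ℝ, 1 ≤ y → Real.log y ≤ 2 * √y := by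
    intro y hy
    have := Real.log_le_self (Real.sqrt_nonneg y)
    rw [Real.log_sqrt (by linarith)] at this
    linarith
  have h4 : √x / d * Real.log x ≤ 2 * (x / d) := by
    calc √x / d * Real.log x ≤ √x / d * (2 * √x) := by gcongr; exact lsq _ hx'
      _ = 2 * ((√x * √x) / d) := by ring
      _ = _ := by rw [Real.mul_self_sqrt (by linarith)]
  have hsd : 1 ≤ √(d:ℝ) := by rw [Real.one_le_sqrt]; exact hd'
  have h5 : Real.log 4 + Real.log (d * (d + 1)) ≤ 10 * √d := by
    have e : Real.log ((d:ℝ) * (d + 1)) ≤ Real.log (d * (2 * d)) := by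
      apply Real.log_le_log (by positivity)
      gcongr
      linarith
    have e2 : Real.log ((d:ℝ) * (2 * d)) = Real.log d + (Real.log 2 + Real.log d) := by
      rw [Real.log_mul (by positivity) (by positivity), Real.log_mul (by positivity) (by positivity)]
    rw [e2] at e
    have l2 := Real.log_two_lt_d9
    have l4 : Real.log 4 = 2 * Real.log 2 := by
      rw [show (4:ℝ) = 2 ^ 2 by norm_num, Real.log_pow]; norm_num
    have := lsq d hd'
    linarith
  have h6 : (x / d : ℝ) * √d = x / √d := by
    have : √(d:ℝ) * √d = d := Real.mul_self_sqrt (by linarith)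
    have h0 : 0 < √(d:ℝ) := by linarith
    rw [div_mul_eq_mul_div, div_eq_div_iff (by linarith) h0.ne']
    rw [mul_assoc, this]
  have hxd : 0 ≤ (x / d : ℝ) := by positivity
  have h7 : (x / d : ℝ) ≤ x / √d := by
    rw [← h6]; nlinarith
  have h8 : ((P.filter (fun p : ℕ => (p:ℝ) ≤ √x)).card : ℝ) * Real.log x ≤ √x / d * Real.log x := by
    gcongr
  have h9 : (x / d : ℝ) * (Real.log 4 + Real.log (d * (d + 1))) ≤ 10 * (x / √d) := by
    rw [← h6]
    calc _ ≤ (x / d : ℝ) * (10 * √d) := by gcongr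
      _ = _ := by ring
  linarith

end UpperBound



section FinalAssembly
open Finset

lemma count_eq_piOne (d N : ℕ) :
    ((range N).filter (fun i => d ∣ Nat.nth Nat.Prime i - 1)).card =
      piOne d (Nat.nth Nat.Prime N - 1) := by
  rw [piOne]
  have hinf := Nat.infinite_setOfPred_prime
  have hmono : StrictMono (Nat.nth Nat.Prime) := Nat.nth_strictMono hinf
  rw [← card_image_of_injective _ hmono.injective]
  congr 1
  ext p
  rw [mem_image, mem_filter, mem_Icc]
  have hN := (Nat.prime_nth_prime N).two_le
  constructor
  · rintro ⟨i, hi, rfl⟩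
    rw [mem_filter, mem_range] at hi
    have h2 := (Nat.prime_nth_prime i).two_le
    have h3 := hmono hi.1
    refine ⟨⟨by omega, by omega⟩, Nat.prime_nth_prime i, ?_⟩
    rw [mem_one_mod (by omega)]
    exact hi.2
  · rintro ⟨⟨h1, h2⟩, h3, h4⟩
    rw [mem_one_mod h1] at h4
    have h5 : Nat.nth Nat.Prime (Nat.count Nat.Prime p) = p := Nat.nth_count h3
    refine ⟨Nat.count Nat.Prime p, ?_, h5⟩
    rw [mem_filter, mem_range, h5]
    refine ⟨?_, h4⟩
    rw [← hmono.lt_iff_lt, h5]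
    omega

lemma piOne_one_nth (N : ℕ) : piOne 1 (Nat.nth Nat.Prime N - 1) = N := by
  rw [← count_eq_piOne]
  simp

lemma tendsto_nth_sub_one : Tendsto (fun N => Nat.nth Nat.Prime N - 1) atTop atTop := by
  refine tendsto_atTop_mono (f := fun N => N) (fun N => ?_) tendsto_id
  have := Nat.add_two_le_nth_prime N
  omega

lemma ratio_tendsto (d : ℕ) (hd : 1 ≤ d) :
    Tendsto (fun n : ℕ => (piOne d n : ℝ) / piOne 1 n) atTop (nhds ((d.totient : ℝ)⁻¹)) := by
  have : NeZero d := ⟨by omega⟩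
  have h1 := piOne_asymp d
  have h2 := piOne_asymp 1
  have h3 := h1.div h2 (by simp)
  simp only [Nat.totient_one, Nat.cast_one, inv_one, div_one] at h3
  refine h3.congr' ?_
  filter_upwards [eventually_ge_atTop 2] with n hn
  have hn' : (2:ℝ) ≤ n := by exact_mod_cast hn
  have hl : 0 < Real.log n := Real.log_pos (by linarith)
  have hn0 : (n:ℝ) ≠ 0 := by linarith
  simp only [Pi.div_apply]
  rw [mul_div_assoc (piOne d n : ℝ), mul_div_assoc (piOne 1 n : ℝ), mul_div_mul_right]
  exact (div_pos hl (by linarith)).ne'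

lemma ratio_bound : ∀ᶠ n : ℕ in atTop, ∀ d : ℕ, 1 ≤ d →
    (piOne d n : ℝ) / piOne 1 n ≤ 44 / √d := by
  have h2 := piOne_asymp 1
  simp only [Nat.totient_one, Nat.cast_one, inv_one] at h2
  filter_upwards [h2.eventually (lt_mem_nhds (show (1/2:ℝ) < 1 by norm_num)),
    eventually_ge_atTop 2] with n hn hn2 d hd
  have hn' : (2:ℝ) ≤ n := by exact_mod_cast hn2
  have hd' : (1:ℝ) ≤ d := by exact_mod_cast hd
  have hl : 0 < Real.log n := Real.log_pos (by linarith)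
  have hb := piOne_bound d n hd (by omega)
  have hs : 0 < √(d:ℝ) := Real.sqrt_pos.2 (by linarith)
  rw [lt_div_iff₀ (by linarith)] at hn
  have hp : 0 < (piOne 1 n : ℝ) := by
    by_contra h
    have : (piOne 1 n : ℝ) * Real.log n ≤ 0 := mul_nonpos_of_nonpos_of_nonneg (not_lt.1 h) hl.le
    linarith
  rw [div_le_iff₀ hp]
  have h3 : (piOne d n : ℝ) * Real.log n ≤ 44 / √d * piOne 1 n * Real.log n := by
    calc _ ≤ 22 * (n / √d) := hb
      _ = 44 / √d * (1 / 2 * n) := by ring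
      _ ≤ 44 / √d * (piOne 1 n * Real.log n) := by gcongr
      _ = _ := by ring
  exact le_of_mul_le_mul_right h3 hl

lemma jordan_div (r m : ℕ) (hm : 1 ≤ m) :
    (jordanTotient r m : ℝ) / (m : ℝ) ^ r =
      ∑' d : ℕ, (ArithmeticFunction.moebius d : ℝ) / (d : ℝ) ^ r * (if d ∣ m then 1 else 0) := by
  have hm' : (m : ℝ) ≠ 0 := by positivity
  rw [tsum_eq_sum (s := m.divisors)]
  · rw [← Nat.sum_div_divisors, jordanTotient]
    push_cast
    rw [sum_div]
    refine sum_congr rfl fun d hd => ?_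
    have hdm := Nat.dvd_of_mem_divisors hd
    have hd0 : (d : ℝ) ≠ 0 := by
      have := Nat.pos_of_mem_divisors hd
      positivity
    rw [if_pos (Nat.div_dvd_of_dvd hdm), Nat.cast_div hdm hd0, div_pow]
    field_simp
  · intro d hd
    rw [if_neg, mul_zero]
    intro h
    exact hd (Nat.mem_divisors.2 ⟨h, by omega⟩)

lemma average_eq (r N : ℕ) :
    (1 / (N : ℝ)) * ∑ i ∈ Finset.range N,
      (jordanTotient r (Nat.nth Nat.Prime i - 1) : ℝ) / ((Nat.nth Nat.Prime i : ℝ) - 1) ^ r =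
    ∑' d : ℕ, (ArithmeticFunction.moebius d : ℝ) / (d : ℝ) ^ r *
      ((piOne d (Nat.nth Nat.Prime N - 1) : ℝ) / piOne 1 (Nat.nth Nat.Prime N - 1)) := by
  have h1 : ∀ i ∈ range N, (jordanTotient r (Nat.nth Nat.Prime i - 1) : ℝ) /
      ((Nat.nth Nat.Prime i : ℝ) - 1) ^ r =
      ∑' d : ℕ, (ArithmeticFunction.moebius d : ℝ) / (d : ℝ) ^ r *
        (if d ∣ Nat.nth Nat.Prime i - 1 then 1 else 0) := by
    intro i _
    have h2 := (Nat.prime_nth_prime i).two_le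
    rw [← jordan_div r _ (by omega), Nat.cast_sub (by omega), Nat.cast_one]
  rw [sum_congr rfl h1, ← Summable.tsum_finsetSum, ← tsum_mul_left]
  · refine tsum_congr fun d => ?_
    rw [← mul_sum, piOne_one_nth, ← count_eq_piOne]
    rw [sum_boole]
    ring
  · intro i _
    refine summable_of_ne_finset_zero (s := (Nat.nth Nat.Prime i - 1).divisors) ?_
    intro d hd
    rw [if_neg, mul_zero]
    intro h
    have h2 := (Nat.prime_nth_prime i).two_le
    exact hd (Nat.mem_divisors.2 ⟨h, by omega⟩)

lemma moebius_term_bound (r d : ℕ) (hr : 1 ≤ r) (y : ℝ) (hy : 0 ≤ y) (hb : 1 ≤ d → y ≤ 44 / √d) :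
    ‖(ArithmeticFunction.moebius d : ℝ) / (d : ℝ) ^ r * y‖ ≤ 44 * (1 / (d : ℝ) ^ (3 / 2 : ℝ)) := by
  rcases Nat.eq_zero_or_pos d with rfl | hd
  · simp only [ArithmeticFunction.map_zero, Int.cast_zero, zero_div, zero_mul, norm_zero]
    positivity
  have hd' : (1:ℝ) ≤ d := by exact_mod_cast hd
  have hd0 : (0:ℝ) < d := by linarith
  have hmu : |(ArithmeticFunction.moebius d : ℝ)| ≤ 1 := by
    exact_mod_cast ArithmeticFunction.abs_moebius_le_one (n := d)
  have hpow : (d:ℝ) ≤ (d:ℝ) ^ r := le_self_pow₀ hd' (by omega)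
  rw [Real.norm_eq_abs, abs_mul, abs_div, abs_of_nonneg hy, abs_of_nonneg (by positivity : 0 ≤ (d:ℝ) ^ r)]
  have e : (d:ℝ) ^ (3 / 2 : ℝ) = d * √d := by
    rw [Real.sqrt_eq_rpow, show (3 / 2 : ℝ) = 1 + 1 / 2 by norm_num, Real.rpow_add hd0, Real.rpow_one]
  calc _ ≤ 1 / (d:ℝ) * (44 / √d) := by
        gcongr
        exact hb hd
    _ = _ := by rw [e]; ring

lemma limit_eq (r : ℕ) (hr : 1 ≤ r) :
    ∑' d : ℕ, (ArithmeticFunction.moebius d : ℝ) / (d : ℝ) ^ r * ((d.totient : ℝ)⁻¹) =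
      artinConstantRank r := by
  have hsum : Summable fun d : ℕ =>
      ‖(ArithmeticFunction.moebius d : ℝ) / (d : ℝ) ^ r * ((d.totient : ℝ)⁻¹)‖ := by
    refine Summable.of_nonneg_of_le (fun _ => norm_nonneg _) (fun d => ?_)
      ((Real.summable_one_div_nat_rpow.2 (by norm_num : (1:ℝ) < 3 / 2)).mul_left 44)
    refine moebius_term_bound r d hr _ (by positivity) fun hd => ?_
    refine le_of_tendsto (ratio_tendsto d hd) ?_
    filter_upwards [ratio_bound] with n hn using hn d hd
  rw [← EulerProduct.eulerProduct_tprod (by simp) ?_ hsum (by simp), artinConstantRank]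
  · refine tprod_congr fun p => ?_
    have hp := p.2
    rw [tsum_eq_sum (s := range 2)]
    · rw [sum_range_succ, sum_range_one]
      simp only [pow_zero, pow_one]
      rw [ArithmeticFunction.moebius_apply_prime hp, Nat.totient_prime hp, Nat.cast_sub hp.one_lt.le]
      simp
      ring
    · intro e he
      rw [mem_range] at he
      rw [ArithmeticFunction.moebius_apply_prime_pow hp (by omega), if_neg (by omega)]
      simp
  · intro m n hmn
    rw [ArithmeticFunction.isMultiplicative_moebius.map_mul_of_coprime hmn, Nat.totient_mul hmn]
    push_cast
    rw [mul_pow, mul_inv]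
    ring

end FinalAssembly

/-- For every `r ≥ 1`, the average `(1/N) ∑_{i=1}^N J_r(p_i - 1)/(p_i - 1)^r` over the
first `N` primes tends to the rank-`r` Artin constant. -/
theorem artin_rank_summation_formula (r : ℕ) (hr : 1 ≤ r) :
    Tendsto (fun N : ℕ =>
        (1 / (N : ℝ)) * ∑ i ∈ Finset.range N,
          (jordanTotient r (Nat.nth Nat.Prime i - 1) : ℝ) / ((Nat.nth Nat.Prime i : ℝ) - 1) ^ r)
      atTop (nhds (artinConstantRank r)) := by
  rw [← limit_eq r hr]
  simp_rw [average_eq]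
  refine tendsto_tsum_of_dominated_convergence
    (bound := fun d : ℕ => 44 * (1 / (d : ℝ) ^ (3 / 2 : ℝ)))
    ((Real.summable_one_div_nat_rpow.2 (by norm_num : (1:ℝ) < 3 / 2)).mul_left 44) ?_ ?_
  · intro d
    rcases Nat.eq_zero_or_pos d with rfl | hd
    · simp
    · exact ((ratio_tendsto d hd).comp tendsto_nth_sub_one).const_mul _
  · filter_upwards [tendsto_nth_sub_one.eventually ratio_bound] with N hN d
    exact moebius_term_bound r d hr _ (by positivity) (hN d)
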